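/- arXiv:2506.12171 — 2 statements merged into one kernel-verified Lean document; each statement's English description precedes it below -/
import Mathlib

section
/- Surface tension blow-up: let s_0 be a point of the boundary (frontier) of the Newton polytope N and let v ∈ ℝ^d be a direction such that s_0 + εv lies in the interior of N for all sufficiently small ε > 0. Then the difference quotient (σ(s_0 + εv) − σ(s_0))/ε tends to −∞ as ε → 0^+. -/
/-- The free energy `F(α) = log(Σ_{j=1}^D exp(⟨e_j, α⟩))` of the multinomial dimer model. -/
noncomputable def freeEnergy (d D : ℕ) (e : Fin D → (Fin d → ℝ)) (α : Fin d → ℝ) : ℝ :=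
  Real.log (∑ j, Real.exp (∑ i, e j i * α i))

/-- The surface tension `σ(s) = sup_{α ∈ ℝ^d} (⟨s, α⟩ − F(α))`, the Legendre dual of `F`. -/
noncomputable def surfTension (d D : ℕ) (e : Fin D → (Fin d → ℝ)) (s : Fin d → ℝ) : ℝ :=
  sSup (Set.range fun α : Fin d → ℝ => (∑ i, s i * α i) - freeEnergy d D e α)

/-!
By Gibbs' variational principle and Lagrange duality, `σ(s)` is minus the largest Shannon entropy of
a probability vector `p` with barycenter `∑ j, p j • e j = s`. At a boundary point an optimal `p`
has a vanishing weight, whereas an interior point is the barycenter of some `q` with all weights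
positive. Mixing a fraction `t` of `q` into `p` switches that weight on and gains entropy of order
`t * log (1 / t)`, which dominates every term linear in `t`.
-/

open Filter Set Topology Real

/-- The Shannon entropy (in nats) of the weights `p`. It is used for probability vectors, but is
defined on all of `ι → ℝ` so that the linear structure of the weights is available. -/
noncomputable def shannonEntropy {ι : Type*} [Fintype ι] (p : ι → ℝ) : ℝ :=
  ∑ j, negMulLog (p j)

/-- The logarithm of the partition function of the energies `-x j`. -/
noncomputable def logSumExp {ι : Type*} [Fintype ι] (x : ι → ℝ) : ℝ :=
  log (∑ j, exp (x j))

/-- The Legendre dual of the free energy `φ ↦ log (∑ j, exp (φ (e j)))`, with `φ` ranging over the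
continuous dual. As a real supremum it has the junk value `0` at points where the supremum is
infinite. -/
noncomputable def logSumExpDual {ι E : Type*} [Fintype ι] [AddCommGroup E] [Module ℝ E]
    [TopologicalSpace E] (e : ι → E) (s : E) : ℝ :=
  ⨆ φ : StrongDual ℝ E, φ s - logSumExp fun j => φ (e j)

section Entropy

variable {ι : Type*} [Fintype ι]

theorem continuous_shannonEntropy : Continuous (shannonEntropy : (ι → ℝ) → ℝ) :=
  continuous_finsetSum _ fun j _ => continuous_negMulLog.comp (continuous_apply j)

theorem concaveOn_shannonEntropy :
    ConcaveOn ℝ (stdSimplex ℝ ι) (shannonEntropy : (ι → ℝ) → ℝ) := by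
  refine ⟨convex_stdSimplex ℝ ι, fun p hp q hq a b ha hb hab => ?_⟩
  simp only [shannonEntropy, smul_eq_mul, Finset.mul_sum, ← Finset.sum_add_distrib]
  exact Finset.sum_le_sum fun j _ => concaveOn_negMulLog.2 (hp.1 j) (hq.1 j) ha hb hab

/-- The entropy has slope `+∞` where a vanishing weight is switched on: the term at `j` is exactly
`t * negMulLog (q j) + q j * negMulLog t`. -/
theorem le_shannonEntropy_lineMap {p q : ι → ℝ} (hp : ∀ i, 0 ≤ p i) (hq : ∀ i, 0 ≤ q i) {j : ι}
    (hpj : p j = 0) {t : ℝ} (ht : t ∈ Icc (0 : ℝ) 1) :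
    (1 - t) * shannonEntropy p + t * shannonEntropy q + q j * negMulLog t
      ≤ shannonEntropy (AffineMap.lineMap p q t) := by
  classical
  have hterm : ∀ i, (1 - t) * negMulLog (p i) + t * negMulLog (q i)
      + Pi.single (M := fun _ => ℝ) j (q j * negMulLog t) i
      ≤ negMulLog (AffineMap.lineMap p q t i) := by
    intro i
    rw [AffineMap.lineMap_apply_module, Pi.add_apply, Pi.smul_apply, Pi.smul_apply]
    obtain rfl | hij := eq_or_ne i j
    · simp only [hpj, negMulLog_zero, smul_eq_mul, mul_zero, zero_add, Pi.single_eq_same,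
        negMulLog_mul]
      exact (add_comm _ _).le
    · rw [Pi.single_eq_of_ne hij, add_zero]
      exact concaveOn_negMulLog.2 (hp i) (hq i) (sub_nonneg.2 ht.2) ht.1 (sub_add_cancel 1 t)
  simpa [shannonEntropy, Finset.sum_add_distrib, Finset.mul_sum]
    using Finset.sum_le_sum fun i (_ : i ∈ Finset.univ) => hterm i

end Entropy

section Gibbs

theorem mul_add_negMulLog_le_exp_sub {p : ℝ} (hp : 0 ≤ p) (y : ℝ) :
    p * y + negMulLog p ≤ exp y - p := by
  obtain rfl | hp := hp.eq_or_lt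
  · simpa using exp_nonneg y
  · have h := add_one_le_exp (y - log p)
    rw [exp_sub, exp_log hp, le_div_iff₀ hp] at h
    rw [negMulLog]
    linarith

variable {ι : Type*} [Fintype ι] [Nonempty ι]

theorem sum_exp_sub_logSumExp (x : ι → ℝ) : ∑ j, exp (x j - logSumExp x) = 1 := by
  have hpos : 0 < ∑ j, exp (x j) := Finset.sum_pos (fun j _ => exp_pos (x j)) Finset.univ_nonempty
  simp only [exp_sub, logSumExp, exp_log hpos, ← Finset.sum_div, div_self hpos.ne']

theorem sum_mul_add_shannonEntropy_le_logSumExp {p : ι → ℝ} (hp : p ∈ stdSimplex ℝ ι)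
    (x : ι → ℝ) : ∑ j, p j * x j + shannonEntropy p ≤ logSumExp x := by
  have h := Finset.sum_le_sum fun j (_ : j ∈ Finset.univ) =>
    mul_add_negMulLog_le_exp_sub (hp.1 j) (x j - logSumExp x)
  simp only [mul_sub, Finset.sum_add_distrib, Finset.sum_sub_distrib, ← Finset.sum_mul, hp.2,
    sum_exp_sub_logSumExp] at h
  rw [shannonEntropy]
  linarith

theorem exists_sum_mul_add_shannonEntropy_eq_logSumExp (x : ι → ℝ) :
    ∃ p ∈ stdSimplex ℝ ι, ∑ j, p j * x j + shannonEntropy p = logSumExp x := by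
  refine ⟨fun j => exp (x j - logSumExp x),
    ⟨fun j => (exp_pos _).le, sum_exp_sub_logSumExp x⟩, ?_⟩
  rw [shannonEntropy, ← Finset.sum_add_distrib]
  calc ∑ j, (exp (x j - logSumExp x) * x j + negMulLog (exp (x j - logSumExp x)))
      = ∑ j, exp (x j - logSumExp x) * logSumExp x := by
        refine Finset.sum_congr rfl fun j _ => ?_
        rw [negMulLog, log_exp]
        ring
    _ = logSumExp x := by rw [← Finset.sum_mul, sum_exp_sub_logSumExp, one_mul]

variable {E : Type*} [AddCommGroup E] [Module ℝ E] [TopologicalSpace E] (e : ι → E)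

theorem map_sub_logSumExp_le_neg_shannonEntropy {p : ι → ℝ} (hp : p ∈ stdSimplex ℝ ι)
    (φ : StrongDual ℝ E) :
    φ (Fintype.linearCombination ℝ e p) - logSumExp (fun j => φ (e j)) ≤ -shannonEntropy p := by
  have h := sum_mul_add_shannonEntropy_le_logSumExp hp fun j => φ (e j)
  simp only [Fintype.linearCombination_apply, map_sum, map_smul, smul_eq_mul]
  linarith

theorem logSumExpDual_le_neg_shannonEntropy {p : ι → ℝ} (hp : p ∈ stdSimplex ℝ ι) :
    logSumExpDual e (Fintype.linearCombination ℝ e p) ≤ -shannonEntropy p :=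
  ciSup_le (map_sub_logSumExp_le_neg_shannonEntropy e hp)

theorem map_sub_logSumExp_le_logSumExpDual {p : ι → ℝ} (hp : p ∈ stdSimplex ℝ ι)
    (φ : StrongDual ℝ E) :
    φ (Fintype.linearCombination ℝ e p) - logSumExp (fun j => φ (e j))
      ≤ logSumExpDual e (Fintype.linearCombination ℝ e p) :=
  le_ciSup (f := fun φ : StrongDual ℝ E =>
      φ (Fintype.linearCombination ℝ e p) - logSumExp fun j => φ (e j))
    ⟨-shannonEntropy p, forall_mem_range.2 (map_sub_logSumExp_le_neg_shannonEntropy e hp)⟩ φ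

end Gibbs

section Duality

variable {E : Type*} [AddCommGroup E] [Module ℝ E] [TopologicalSpace E] [IsTopologicalAddGroup E]
  [ContinuousSMul ℝ E] [SeparatingDual ℝ E]

/-- Lagrange duality for minimizing `f` over `X` subject to `L x = s`, the functional `φ` being the
multiplier: a bound that the unconstrained minima obey for every multiplier is attained by a
feasible point. -/
theorem exists_map_eq_and_le_of_forall_dual {V : Type*} [AddCommGroup V] [Module ℝ V]
    [TopologicalSpace V] [IsTopologicalAddGroup V] [ContinuousSMul ℝ V] {X : Set V}
    (hX : IsCompact X) {f : V → ℝ} (hf : Continuous f) (hfX : ConvexOn ℝ X f) (L : V →L[ℝ] E)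
    {s : E} {c : ℝ} (h : ∀ φ : StrongDual ℝ E, ∃ x ∈ X, f x + φ (s - L x) ≤ c) :
    ∃ x ∈ X, L x = s ∧ f x ≤ c := by
  by_contra! hlt
  have hcont (φ : StrongDual ℝ E) : Continuous fun x => f x + φ (s - L x) := by fun_prop
  have hcontDual (x : V) : Continuous fun φ : StrongDual ℝ E => f x + φ (s - L x) := by fun_prop
  have hconvex (φ : StrongDual ℝ E) : ConvexOn ℝ X fun x => f x + φ (s - L x) := by
    have haff : ConvexOn ℝ X fun x => φ s - φ (L x) :=
      (convexOn_const _ hfX.1).sub ((φ ∘L L).toLinearMap.concaveOn hfX.1)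
    simp only [map_sub]
    exact hfX.add haff
  have hconcave (x : V) : ConcaveOn ℝ univ fun φ : StrongDual ℝ E => f x + φ (s - L x) := by
    refine ⟨convex_univ, fun φ _ ψ _ a b _ _ hab => le_of_eq ?_⟩
    simp only [smul_eq_mul, add_apply, smul_apply]
    linear_combination f x * hab
  have hviolated : ∀ x ∈ X, ∃ φ : StrongDual ℝ E, c < f x + φ (s - L x) := by
    intro x hx
    by_cases hxs : L x = s
    · exact ⟨0, by simpa using hlt x hx hxs⟩
    · obtain ⟨φ, hφ⟩ := SeparatingDual.exists_eq_one (R := ℝ) (sub_ne_zero.2 (Ne.symm hxs))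
      exact ⟨(c - f x + 1) • φ, by rw [smul_apply, hφ, smul_eq_mul]; linarith⟩
  -- Compactness leaves finitely many multipliers; Sion's theorem merges them into a single one.
  obtain ⟨S, hS⟩ := hX.elim_finite_subcover (fun φ : StrongDual ℝ E => {x | c < f x + φ (s - L x)})
    (fun φ => isOpen_lt continuous_const (hcont φ)) fun x hx => mem_iUnion.2 (hviolated x hx)
  obtain ⟨φ, -, hφ⟩ := Sion.exists_lt_iInf_of_lt_iInf_of_finite ((h 0).imp fun _ => And.left) hX
    (fun φ _ => (hcont φ).lowerSemicontinuous.lowerSemicontinuousOn X)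
    (fun φ _ => (hconvex φ).quasiconvexOn) convex_univ
    (fun x _ => (hcontDual x).upperSemicontinuous.upperSemicontinuousOn univ)
    (fun x _ => (hconcave x).quasiconcaveOn)
    hfX.1 S.finite_toSet (subset_univ _) fun x hx => by simpa using hS hx
  obtain ⟨x, hx, hxc⟩ := h φ
  exact (hφ x hx).not_ge hxc

variable {ι : Type*} [Fintype ι] [Nonempty ι]

theorem exists_neg_shannonEntropy_le_logSumExpDual (e : ι → E) {s : E}
    (hs : s ∈ Fintype.linearCombination ℝ e '' stdSimplex ℝ ι) :
    ∃ p ∈ stdSimplex ℝ ι, Fintype.linearCombination ℝ e p = s ∧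
      -shannonEntropy p ≤ logSumExpDual e s := by
  obtain ⟨p, hp, rfl⟩ := hs
  refine exists_map_eq_and_le_of_forall_dual (isCompact_stdSimplex ℝ ι)
    continuous_shannonEntropy.neg concaveOn_shannonEntropy.neg
    (Fintype.linearCombination ℝ e).toContinuousLinearMap fun φ => ?_
  obtain ⟨q, hq, hqφ⟩ := exists_sum_mul_add_shannonEntropy_eq_logSumExp fun j => φ (e j)
  refine ⟨q, hq, le_trans (le_of_eq ?_) (map_sub_logSumExp_le_logSumExpDual e hp φ)⟩
  have hφq : φ (Fintype.linearCombination ℝ e q) = ∑ j, q j * φ (e j) := by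
    simp only [Fintype.linearCombination_apply, map_sum, map_smul, smul_eq_mul]
  rw [LinearMap.coe_toContinuousLinearMap', map_sub, hφq, Pi.neg_apply]
  linarith

end Duality

section Simplex

theorem exists_mem_openSegment_of_mem_nhds {E : Type*} [AddCommGroup E] [Module ℝ E]
    [TopologicalSpace E] [IsTopologicalAddGroup E] [ContinuousSMul ℝ E] {C : Set E} {y : E}
    (hC : C ∈ 𝓝 y) (x : E) : ∃ z ∈ C, y ∈ openSegment ℝ x z := by
  have hlim : Tendsto (fun t : ℝ => y + t • (y - x)) (𝓝[>] 0) (𝓝 y) := by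
    have hcont : Continuous fun t : ℝ => y + t • (y - x) := by fun_prop
    simpa using (hcont.tendsto 0).mono_left nhdsWithin_le_nhds
  obtain ⟨t, htC, ht⟩ := ((hlim.eventually hC).and self_mem_nhdsWithin).exists
  have ht : 0 < t := ht
  refine ⟨_, htC, mem_openSegment_iff_div.2 ⟨t, 1, ht, one_pos, ?_⟩⟩
  match_scalars <;> field_simp <;> ring

variable {ι : Type*} [Fintype ι]

theorem exists_mem_stdSimplex_mem_openSegment {p q : ι → ℝ} (hp : p ∈ stdSimplex ℝ ι)
    (hpos : ∀ j, 0 < p j) (hq : q ∈ stdSimplex ℝ ι) :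
    ∃ r ∈ stdSimplex ℝ ι, p ∈ openSegment ℝ q r := by
  have hnhds : {r : ι → ℝ | ∀ j, 0 ≤ r j} ∈ 𝓝 p :=
    eventually_all.2 fun j => (continuous_apply j).continuousAt.eventually_const_le (hpos j)
  obtain ⟨r, hr, hpr⟩ := exists_mem_openSegment_of_mem_nhds hnhds q
  refine ⟨r, ⟨hr, ?_⟩, hpr⟩
  obtain ⟨a, b, -, hb, hab, rfl⟩ := hpr
  have hsum : a + b * ∑ j, r j = a + b := by
    simpa [Finset.sum_add_distrib, ← Finset.mul_sum, hq.2, hab] using hp.2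
  exact mul_left_cancel₀ hb.ne' (by linarith)

variable {E : Type*} [AddCommGroup E] [Module ℝ E]

theorem convexHull_range_eq_image_stdSimplex (e : ι → E) :
    convexHull ℝ (range e) = Fintype.linearCombination ℝ e '' stdSimplex ℝ ι := by
  classical
  rw [← convexHull_rangle_single_eq_stdSimplex, LinearMap.image_convexHull, ← range_comp]
  congr! 2 with j
  ext j
  simp [Fintype.linearCombination_apply_single]

variable [TopologicalSpace E] [IsTopologicalAddGroup E] [ContinuousSMul ℝ E]

theorem exists_pos_of_mem_interior_convexHull_range {e : ι → E} {s : E}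
    (hs : s ∈ interior (convexHull ℝ (range e))) :
    ∃ p ∈ stdSimplex ℝ ι, (∀ j, 0 < p j) ∧ Fintype.linearCombination ℝ e p = s := by
  have : Nonempty ι :=
    range_nonempty_iff_nonempty.1 (convexHull_nonempty_iff.1 ⟨s, interior_subset hs⟩)
  let b : stdSimplex ℝ ι := stdSimplex.barycenter
  obtain ⟨z, hz, hsz⟩ := exists_mem_openSegment_of_mem_nhds (mem_interior_iff_mem_nhds.1 hs)
    (Fintype.linearCombination ℝ e b)
  rw [convexHull_range_eq_image_stdSimplex] at hz
  obtain ⟨q, hq, rfl⟩ := hz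
  have himage := image_openSegment ℝ (Fintype.linearCombination ℝ e).toAffineMap b q
  obtain ⟨p, hpb, rfl⟩ := himage.superset hsz
  refine ⟨p, (convex_stdSimplex ℝ ι).openSegment_subset b.2 hq hpb, fun j => ?_, rfl⟩
  obtain ⟨a, c, ha, hc, -, rfl⟩ := hpb
  have hbj : 0 < (b : ι → ℝ) j := inv_pos.2 (Nat.cast_pos.2 Fintype.card_pos)
  have hqj : 0 ≤ q j := hq.1 j
  simp only [Pi.add_apply, Pi.smul_apply, smul_eq_mul]
  positivity

theorem linearCombination_mem_interior_convexHull_range {e : ι → E}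
    (hne : (interior (convexHull ℝ (range e))).Nonempty) {p : ι → ℝ} (hp : p ∈ stdSimplex ℝ ι)
    (hpos : ∀ j, 0 < p j) :
    Fintype.linearCombination ℝ e p ∈ interior (convexHull ℝ (range e)) := by
  obtain ⟨y, hy⟩ := hne
  obtain ⟨q, hq, -, rfl⟩ := exists_pos_of_mem_interior_convexHull_range hy
  obtain ⟨r, hr, hpr⟩ := exists_mem_stdSimplex_mem_openSegment hp hpos hq
  have hrN : Fintype.linearCombination ℝ e r ∈ convexHull ℝ (range e) :=
    convexHull_range_eq_image_stdSimplex e ▸ mem_image_of_mem _ hr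
  refine (convex_convexHull ℝ _).openSegment_interior_self_subset_interior hy hrN ?_
  have himage := image_openSegment ℝ (Fintype.linearCombination ℝ e).toAffineMap q r
  exact himage.subset (mem_image_of_mem _ hpr)

end Simplex

section Blowup

variable {ι E : Type*} [Fintype ι] [AddCommGroup E] [Module ℝ E] [TopologicalSpace E]
  [IsTopologicalAddGroup E] [ContinuousSMul ℝ E] [SeparatingDual ℝ E] {e : ι → E}

theorem exists_logSumExpDual_lineMap_le {s₀ s₁ : E}
    (hs₀ : s₀ ∈ frontier (convexHull ℝ (range e)))
    (hs₁ : s₁ ∈ interior (convexHull ℝ (range e))) :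
    ∃ a > 0, ∃ c, ∀ t ∈ Icc (0 : ℝ) 1,
      logSumExpDual e (AffineMap.lineMap s₀ s₁ t) ≤
        logSumExpDual e s₀ + c * t - a * negMulLog t := by
  have : T2Space E := SeparatingDual.t2Space (R := ℝ)
  have : Nonempty ι :=
    range_nonempty_iff_nonempty.1 (convexHull_nonempty_iff.1 ⟨s₁, interior_subset hs₁⟩)
  have hs₀mem := ((finite_range e).isClosed_convexHull ℝ).frontier_subset hs₀
  rw [convexHull_range_eq_image_stdSimplex] at hs₀mem
  obtain ⟨p, hp, hps₀, hopt⟩ := exists_neg_shannonEntropy_le_logSumExpDual e hs₀mem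
  obtain ⟨q, hq, hqpos, hqs₁⟩ := exists_pos_of_mem_interior_convexHull_range hs₁
  obtain ⟨j, hpj⟩ : ∃ j, p j = 0 := by
    by_contra! hne
    refine hs₀.2 (hps₀ ▸ linearCombination_mem_interior_convexHull_range ⟨s₁, hs₁⟩ hp fun j => ?_)
    exact (hp.1 j).lt_of_ne' (hne j)
  refine ⟨q j, hqpos j, shannonEntropy p - shannonEntropy q, fun t ht => ?_⟩
  have hmap : Fintype.linearCombination ℝ e (AffineMap.lineMap p q t) =
      AffineMap.lineMap s₀ s₁ t := by
    simp only [AffineMap.lineMap_apply_module, map_add, map_smul, hps₀, hqs₁]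
  calc logSumExpDual e (AffineMap.lineMap s₀ s₁ t)
      ≤ -shannonEntropy (AffineMap.lineMap p q t) :=
        hmap ▸ logSumExpDual_le_neg_shannonEntropy e ((convex_stdSimplex ℝ ι).lineMap_mem hp hq ht)
    _ ≤ -((1 - t) * shannonEntropy p + t * shannonEntropy q + q j * negMulLog t) :=
        neg_le_neg (le_shannonEntropy_lineMap hp.1 hq.1 hpj ht)
    _ ≤ logSumExpDual e s₀ + (shannonEntropy p - shannonEntropy q) * t - q j * negMulLog t := by
        linarith

theorem surfTension_blowup_at_boundary_general {s₀ v : E} {r : ℝ}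
    (hs₀ : s₀ ∈ frontier (convexHull ℝ (range e))) (hr : 0 < r)
    (hv : s₀ + r • v ∈ interior (convexHull ℝ (range e))) :
    Tendsto (fun ε : ℝ => (logSumExpDual e (s₀ + ε • v) - logSumExpDual e s₀) / ε)
      (𝓝[>] 0) atBot := by
  obtain ⟨a, ha, c, hbound⟩ := exists_logSumExpDual_lineMap_le hs₀ hv
  have hlim : Tendsto (fun ε : ℝ => (c - a * log r + a * log ε) / r) (𝓝[>] 0) atBot :=
    (tendsto_atBot_add_const_left _ _
      (tendsto_log_nhdsGT_zero.const_mul_atBot ha)).atBot_div_const hr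
  refine tendsto_atBot_mono' _ ?_ hlim
  filter_upwards [Ioo_mem_nhdsGT hr] with ε ⟨hε, hεr⟩
  have hpoint : AffineMap.lineMap s₀ (s₀ + r • v) (ε / r) = s₀ + ε • v := by
    rw [AffineMap.lineMap_apply_module', add_sub_cancel_left, smul_smul, div_mul_cancel₀ _ hr.ne',
      add_comm]
  have h := hbound (ε / r) ⟨by positivity, (div_le_one hr).2 hεr.le⟩
  rw [hpoint, negMulLog, log_div hε.ne' hr.ne'] at h
  rw [div_le_iff₀ hε]
  calc logSumExpDual e (s₀ + ε • v) - logSumExpDual e s₀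
      ≤ c * (ε / r) - a * (-(ε / r) * (log ε - log r)) := by linarith
    _ = (c - a * log r + a * log ε) / r * ε := by ring

end Blowup

theorem surfTension_eq_logSumExpDual (d D : ℕ) (e : Fin D → (Fin d → ℝ)) :
    surfTension d D e = logSumExpDual e := by
  ext s
  let pairing : (Fin d → ℝ) ≃ₗ[ℝ] StrongDual ℝ (Fin d → ℝ) :=
    dotProductEquiv ℝ (Fin d) ≪≫ₗ LinearMap.toContinuousLinearMap
  have hpairing (α x : Fin d → ℝ) : pairing α x = ∑ i, x i * α i := by
    simp [pairing, dotProduct, mul_comm]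
  rw [logSumExpDual, ← pairing.toEquiv.iSup_comp]
  simp only [LinearEquiv.coe_toEquiv, hpairing]
  rfl

/-- Surface tension blow-up: if `s₀` is on the frontier of the Newton polytope and
`s₀ + εv` is in the interior of the polytope for all sufficiently small `ε > 0`, then
`(σ(s₀ + εv) − σ(s₀))/ε → −∞` as `ε → 0⁺`. -/
theorem surfTension_blowup_at_boundary
    (d D : ℕ) (hd : 1 ≤ d) (hD : 1 ≤ D)
    (e : Fin D → (Fin d → ℝ))
    (hspan : Submodule.span ℝ (Set.range e) = ⊤)
    (hsum : ∑ j, e j = 0)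
    (s₀ v : Fin d → ℝ)
    (hs₀ : s₀ ∈ frontier (convexHull ℝ (Set.range e)))
    (hv : ∀ᶠ ε in nhdsWithin (0 : ℝ) (Set.Ioi 0),
      s₀ + ε • v ∈ interior (convexHull ℝ (Set.range e))) :
    Filter.Tendsto
      (fun ε : ℝ => (surfTension d D e (s₀ + ε • v) - surfTension d D e s₀) / ε)
      (nhdsWithin (0 : ℝ) (Set.Ioi 0)) Filter.atBot := by
  obtain ⟨r, hr, hr₀⟩ := (hv.and self_mem_nhdsWithin).exists
  simpa only [surfTension_eq_logSumExpDual] using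
    surfTension_blowup_at_boundary_general hs₀ hr₀ hr
end

section
/- Divergence identity for the gauge operator: if q : ℝ^d → ℝ is C², then the C¹ vector field x ↦ ∇F(∇q(x)) satisfies div(∇F(∇q))(x) = (1/2) · Σ_{i,j=1}^D [ exp(⟨e_i + e_j, ∇q(x)⟩) / ( Σ_{k=1}^D exp(⟨e_k, ∇q(x)⟩) )² ] · ⟨ e_j − e_i, (Hess q)(x) (e_j − e_i) ⟩ for every x ∈ ℝ^d, where Hess q is the Hessian of q and div is the sum of the coordinate partial derivatives. -/
/-!
Let `p` be the Gibbs weights of the numbers `⟨e_k, α⟩`, so that `m = ∑_j p_j e_j` is `∇F(α)`.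
Since `p_j = exp (⟨e_j, α⟩ - F(α))`, the differential of `∇F` is the covariance
`β ↦ ∑_j p_j ⟨e_j - m, β⟩ e_j`, a sum of rank-one maps. With `H = Hess q`, the chain rule therefore
gives `D(∇F ∘ ∇q)` the trace `∑_j p_j H(e_j, e_j - m)`, which is the variance
`∑_j p_j H(e_j, e_j) - H(m, m)` of the `e_j` with respect to `H`. Writing a variance as half the
mean of `H(e_j - e_i, e_j - e_i)` over independent pairs (Korkine's identity) gives the formula.
-/

open Real

/-- The divergence of a vector field on a finite-dimensional space, defined without coordinates as
the trace of its derivative. In infinite dimension it has the junk value `0`. -/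
noncomputable def divergence {E : Type*} [NormedAddCommGroup E] [NormedSpace ℝ E]
    (V : E → E) (x : E) : ℝ :=
  LinearMap.trace ℝ E (fderiv ℝ V x)

theorem divergence_pi_eq_sum_fderiv {ι : Type*} [Fintype ι] [DecidableEq ι]
    {V : (ι → ℝ) → ι → ℝ} {x : ι → ℝ} (hV : DifferentiableAt ℝ V x) :
    divergence V x = ∑ i, fderiv ℝ (fun y => V y i) x (Pi.single i 1) := by
  simp [divergence, LinearMap.trace_eq_matrix_trace ℝ (Pi.basisFun ℝ ι), Matrix.trace,
    fderiv_apply hV]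

theorem sum_sum_mul_smul_apply_sub_sub {R M N P κ : Type*} [CommRing R] [AddCommGroup M]
    [AddCommGroup N] [AddCommGroup P] [Module R M] [Module R N] [Module R P] [Fintype κ]
    (B : M →ₗ[R] N →ₗ[R] P) (p : κ → R) (u : κ → M) (v : κ → N) :
    ∑ i, ∑ j, (p i * p j) • B (u j - u i) (v j - v i) =
      (2 : R) • ((∑ i, p i) • ∑ j, p j • B (u j) (v j) -
        B (∑ i, p i • u i) (∑ j, p j • v j)) := by
  have diagonal : ∑ i, ∑ j, (p i * p j) • B (u j) (v j) =
      (∑ i, p i) • ∑ j, p j • B (u j) (v j) := by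
    simp only [Finset.sum_smul, ← Finset.smul_sum, mul_smul]
  have cross : ∑ i, ∑ j, (p i * p j) • B (u i) (v j) =
      B (∑ i, p i • u i) (∑ j, p j • v j) := by
    rw [map_sum B, LinearMap.sum_apply]
    refine Finset.sum_congr rfl fun i _ => ?_
    rw [map_smul, LinearMap.smul_apply, map_sum]
    simp only [map_smul, mul_smul, ← Finset.smul_sum]
  have diagonal_swap : ∑ i, ∑ j, (p i * p j) • B (u i) (v i) =
      (∑ i, p i) • ∑ j, p j • B (u j) (v j) := by
    rw [← diagonal, Finset.sum_comm]
    simp only [mul_comm]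
  have cross_swap : ∑ i, ∑ j, (p i * p j) • B (u j) (v i) =
      B (∑ i, p i • u i) (∑ j, p j • v j) := by
    rw [← cross, Finset.sum_comm]
    simp only [mul_comm]
  simp only [map_sub, LinearMap.sub_apply, smul_sub, Finset.sum_sub_distrib]
  rw [diagonal, cross, diagonal_swap, cross_swap]
  module

section Softmax

variable {κ : Type*} [Fintype κ]

/-- The softmax (Gibbs) weights of a family of real numbers: the probability weights proportional
to `exp (a j)`, against which `∇F` is a mean. -/
noncomputable def softmax (a : κ → ℝ) (j : κ) : ℝ :=
  exp (a j) / ∑ k, exp (a k)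

theorem sum_exp_pos [Nonempty κ] (a : κ → ℝ) : 0 < ∑ k, exp (a k) :=
  Finset.sum_pos (fun k _ => exp_pos (a k)) Finset.univ_nonempty

theorem sum_softmax [Nonempty κ] (a : κ → ℝ) : ∑ j, softmax a j = 1 := by
  simp only [softmax, ← Finset.sum_div, div_self (sum_exp_pos a).ne']

theorem softmax_eq_exp_sub_log (a : κ → ℝ) (j : κ) :
    softmax a j = exp (a j - log (∑ k, exp (a k))) := by
  have : Nonempty κ := ⟨j⟩
  rw [exp_sub, exp_log (sum_exp_pos a), softmax]

theorem hasFDerivAt_log_sum_exp [Nonempty κ] (a : κ → ℝ) :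
    HasFDerivAt (fun b : κ → ℝ => log (∑ k, exp (b k)))
      (∑ k, softmax a k • ContinuousLinearMap.proj (R := ℝ) (φ := fun _ => ℝ) k) a := by
  have hsum := HasFDerivAt.fun_sum fun k (_ : k ∈ Finset.univ) =>
    (hasFDerivAt_apply (𝕜 := ℝ) (F' := fun _ => ℝ) k a).exp
  refine (hsum.log (sum_exp_pos a).ne').congr_fderiv ?_
  simp only [softmax, Finset.smul_sum, smul_smul, div_eq_inv_mul]

theorem hasFDerivAt_softmax (a : κ → ℝ) (j : κ) :
    HasFDerivAt (fun b : κ → ℝ => softmax b j)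
      (softmax a j • (ContinuousLinearMap.proj (R := ℝ) (φ := fun _ => ℝ) j -
        ∑ k, softmax a k • ContinuousLinearMap.proj (R := ℝ) (φ := fun _ => ℝ) k)) a := by
  have : Nonempty κ := ⟨j⟩
  simp only [softmax_eq_exp_sub_log _ j]
  exact ((hasFDerivAt_apply j a).sub (hasFDerivAt_log_sum_exp a)).exp

end Softmax

section GradLogSumExp

variable {E κ : Type*} [NormedAddCommGroup E] [NormedSpace ℝ E] [Fintype κ]

/-- The gradient `∇F` of the free energy `F l = log (∑ j, exp (l (e j)))`. Here `F` is a function of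
the covector `l`, so that its gradient is a vector: the mean of the `e j` under the Gibbs weights
at `l`. -/
noncomputable def gradLogSumExp (e : κ → E) (l : E →L[ℝ] ℝ) : E :=
  ∑ j, softmax (fun k => l (e k)) j • e j

theorem gradLogSumExp_apply {ι : Type*} [Fintype ι] (e : κ → ι → ℝ) (l : (ι → ℝ) →L[ℝ] ℝ) (i : ι) :
    gradLogSumExp e l i = (∑ k, exp (l (e k)))⁻¹ * ∑ j, exp (l (e j)) * e j i := by
  simp only [gradLogSumExp, softmax, Finset.sum_apply, Pi.smul_apply, smul_eq_mul, Finset.mul_sum]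
  exact Finset.sum_congr rfl fun j _ => by ring

theorem map_gradLogSumExp (e : κ → E) (l m : E →L[ℝ] ℝ) :
    m (gradLogSumExp e l) = ∑ j, softmax (fun k => l (e k)) j * m (e j) := by
  simp only [gradLogSumExp, map_sum, map_smul, smul_eq_mul]

theorem hasFDerivAt_gradLogSumExp (e : κ → E) (l : E →L[ℝ] ℝ) :
    HasFDerivAt (gradLogSumExp e)
      (∑ j, softmax (fun k => l (e k)) j •
        (ContinuousLinearMap.apply ℝ ℝ (e j - gradLogSumExp e l)).smulRight (e j)) l := by
  let eval : (E →L[ℝ] ℝ) →L[ℝ] κ → ℝ :=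
    ContinuousLinearMap.pi fun k => ContinuousLinearMap.apply ℝ ℝ (e k)
  have hsoftmax (j : κ) := (hasFDerivAt_softmax (eval l) j).comp l eval.hasFDerivAt
  refine (HasFDerivAt.fun_sum fun j _ => (hsoftmax j).smul_const (e j)).congr_fderiv ?_
  ext m
  simp [eval, map_gradLogSumExp, mul_smul]

theorem divergence_gradLogSumExp_comp [FiniteDimensional ℝ E] (e : κ → E) {ω : E → E →L[ℝ] ℝ}
    {H : E →L[ℝ] E →L[ℝ] ℝ} {x : E} (hω : HasFDerivAt ω H x) :
    divergence (gradLogSumExp e ∘ ω) x =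
      ∑ j, softmax (fun k => ω x (e k)) j * H (e j) (e j - gradLogSumExp e (ω x)) := by
  have trace_term (u v : E) :
      LinearMap.trace ℝ E (((ContinuousLinearMap.apply ℝ ℝ u).smulRight v).comp H) = H v u :=
    LinearMap.trace_smulRight (H.flip u : E →ₗ[ℝ] ℝ) v
  rw [divergence, ((hasFDerivAt_gradLogSumExp e (ω x)).comp x hω).fderiv]
  simp only [ContinuousLinearMap.finsetSum_comp, ContinuousLinearMap.smul_comp,
    ContinuousLinearMap.toLinearMap_sum, ContinuousLinearMap.toLinearMap_smul, map_sum, map_smul,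
    trace_term, smul_eq_mul]

theorem divergence_identity_gauge_operator_general [FiniteDimensional ℝ E] [Nonempty κ] (e : κ → E)
    {ω : E → E →L[ℝ] ℝ} {H : E →L[ℝ] E →L[ℝ] ℝ} {x : E} (hω : HasFDerivAt ω H x) :
    divergence (gradLogSumExp e ∘ ω) x =
      (1 / 2) * ∑ i, ∑ j, (exp (ω x (e i + e j)) / (∑ k, exp (ω x (e k))) ^ 2) *
        H (e j - e i) (e j - e i) := by
  set p := softmax fun k => ω x (e k)
  set m := gradLogSumExp e (ω x)
  have exp_div_eq (i j : κ) : exp (ω x (e i + e j)) / (∑ k, exp (ω x (e k))) ^ 2 = p i * p j := by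
    rw [map_add, exp_add, sq, mul_div_mul_comm]
    rfl
  have korkine : ∑ i, ∑ j, p i * p j * H (e j - e i) (e j - e i) =
      2 * (∑ j, p j * H (e j) (e j) - H m m) := by
    have h := sum_sum_mul_smul_apply_sub_sub H.toLinearMap₁₂ p e e
    rwa [sum_softmax, one_smul] at h
  have variance : ∑ j, p j * H (e j) (e j - m) = ∑ j, p j * H (e j) (e j) - H m m := by
    have mean : ∑ j, p j * H (e j) m = H m m := (map_gradLogSumExp e (ω x) (H.flip m)).symm
    simp only [map_sub, mul_sub, Finset.sum_sub_distrib, mean]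
  rw [divergence_gradLogSumExp_comp e hω]
  simp only [exp_div_eq]
  rw [korkine, variance]
  ring

end GradLogSumExp

/-- Divergence identity for the gauge operator: for `F(α) = log(Σ_j exp(⟨e_j, α⟩))` with
gradient `∇F(α) = (Σ_j exp(⟨e_j, α⟩) e_j)/(Σ_k exp(⟨e_k, α⟩))`, and `q : ℝ^d → ℝ` of
class `C²`, the vector field `x ↦ ∇F(∇q(x))` satisfies
`div(∇F(∇q))(x) = (1/2) Σ_{i,j} [exp(⟨e_i+e_j, ∇q(x)⟩)/(Σ_k exp(⟨e_k, ∇q(x)⟩))²]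
  · ⟨e_j − e_i, Hess q(x)(e_j − e_i)⟩`
for every `x`, where `⟨e, ∇q(x)⟩ = fderiv ℝ q x e`, the Hessian quadratic form is given
by `fderiv ℝ (fderiv ℝ q) x`, and `div` is the sum of the coordinate partial
derivatives. -/
theorem divergence_identity_gauge_operator
    (d D : ℕ) (hd : 1 ≤ d) (hD : 1 ≤ D)
    (e : Fin D → (Fin d → ℝ))
    (q : (Fin d → ℝ) → ℝ) (hq : ContDiff ℝ 2 q) (x : Fin d → ℝ) :
    (∑ i, fderiv ℝ (fun y : Fin d → ℝ =>
        (∑ k, Real.exp (fderiv ℝ q y (e k)))⁻¹ *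
          ∑ j, Real.exp (fderiv ℝ q y (e j)) * e j i) x (Pi.single i 1))
      = (1 / 2) * ∑ i, ∑ j,
          (Real.exp (fderiv ℝ q x (e i + e j)) /
            (∑ k, Real.exp (fderiv ℝ q x (e k))) ^ 2) *
          (fderiv ℝ (fderiv ℝ q) x (e j - e i) (e j - e i)) := by
  have : Nonempty (Fin D) := ⟨⟨0, hD⟩⟩
  have hω : HasFDerivAt (fderiv ℝ q) (fderiv ℝ (fderiv ℝ q) x) x :=
    ((hq.fderiv_right (m := 1) le_rfl).differentiable one_ne_zero x).hasFDerivAt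
  have hV := ((hasFDerivAt_gradLogSumExp e (fderiv ℝ q x)).comp x hω).differentiableAt
  rw [← divergence_identity_gauge_operator_general e hω, divergence_pi_eq_sum_fderiv hV]
  simp only [Function.comp_apply, gradLogSumExp_apply]
end
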